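/- Let Z ⊆ Σ₂ be a nonempty compact σ-invariant set and z ∈ Z with dense orbit. If φ(z_i, i) = 1 and φ(1−z_i, i) = 0 for all i ∈ ℤ, then for every ergodic σ-invariant measure μ on Σ₂, Λ(φ, μ) = 1 − inf{ d̄(μ, ν) : ν ergodic, ν(Z) = 1 }. -/

import Mathlib

open MeasureTheory Filter

noncomputable section

/-- The full two-sided shift space on two symbols. -/
abbrev Sig := ℤ → Bool

/-- The two-sided shift map. -/
def shift : Sig → Sig := fun x i => x (i + 1)

/-- `birk φ n x = sup_{k ∈ ℤ} Σ_{i=0}^{n-1} φ(x_i, i+k)`, which equals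
`log ‖L^φ_{x_{n-1}} ⋯ L^φ_{x_0}‖` for the associated weighted shift operators. -/
def birk (φ : Bool → ℤ → ℝ) (n : ℕ) (x : Sig) : ℝ :=
  ⨆ k : ℤ, ∑ i ∈ Finset.range n, φ (x (i : ℤ)) ((i : ℤ) + k)

/-- The top Lyapunov exponent `Λ(φ,μ) = inf_{n ≥ 1} (1/n) ∫ birk φ n dμ`
(the limit exists and equals this infimum by subadditivity). -/
def Lam (φ : Bool → ℤ → ℝ) (μ : Measure Sig) : ℝ :=
  ⨅ n : ℕ, ((n : ℝ) + 1)⁻¹ * ∫ x, birk φ (n + 1) x ∂μ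

/-- `log ϱ(L₀^φ, L₁^φ) = inf_{n ≥ 1} (1/n) sup_{x} birk φ n x`. -/
def logSpr (φ : Bool → ℤ → ℝ) : ℝ :=
  ⨅ n : ℕ, ((n : ℝ) + 1)⁻¹ * ⨆ x : Sig, birk φ (n + 1) x

/-- The Ornstein `d̄`-metric: `d̄(μ,ν)` is the infimum over `(σ×σ)`-invariant joinings `m`
of `μ` and `ν` of `m {(x,y) : x₀ ≠ y₀}`. -/
def dbar (μ ν : Measure Sig) : ℝ :=
  sInf {r : ℝ | ∃ m : Measure (Sig × Sig),
    IsProbabilityMeasure m ∧ m.map (Prod.map shift shift) = m ∧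
    m.map Prod.fst = μ ∧ m.map Prod.snd = ν ∧
    r = (m {p : Sig × Sig | p.1 0 ≠ p.2 0}).toReal}

/-!
Since the orbit of `z` is dense in `Z`, `birk φ n x` is the maximum over `y ∈ Z` of the number of
agreements of `x` and `y` at the times `0, …, n - 1`. By Krylov–Bogoliubov averaging along
near-optimal `y` chosen measurably in `x`, `Lam φ μ` is the maximum of `m {(x, y) | x 0 = y 0}`
over the joinings `m` of `μ` with the invariant probability measures on `Z`. These joinings form a
compact convex set, so the maximum is attained at an extreme point. As `μ` is ergodic, an extreme
joining is ergodic; its second marginal `ν` is then ergodic, and `1 - Lam φ μ = dbar μ ν`.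
-/

open Topology Function
open scoped ENNReal BoundedContinuousFunction

section ExtremePoints

theorem exists_mem_extremePoints_isMaxOn {E : Type*} [AddCommGroup E] [Module ℝ E]
    [TopologicalSpace E] [T2Space E] [IsTopologicalAddGroup E] [ContinuousSMul ℝ E]
    [LocallyConvexSpace ℝ E] {s : Set E} (hs : IsCompact s) (hne : s.Nonempty)
    (l : StrongDual ℝ E) : ∃ x ∈ s.extremePoints ℝ, IsMaxOn l s x := by
  have hexp : IsExposed ℝ s (l.toExposed s) := ContinuousLinearMap.toExposed.isExposed
  obtain ⟨x₀, hx₀, hmax⟩ := hs.exists_isMaxOn hne l.continuous.continuousOn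
  obtain ⟨x, hx⟩ := (hexp.isCompact hs).extremePoints_nonempty ⟨x₀, hx₀, hmax⟩
  exact ⟨x, hexp.isExtreme.extremePoints_subset_extremePoints hx, hx.1.2⟩

variable {Y : Type*} [TopologicalSpace Y] [MeasurableSpace Y]

/-- A probability measure seen as a functional on bounded continuous functions. It embeds the
space of probability measures, with its weak topology, in a locally convex real vector space. -/
def integralFunctional (m : ProbabilityMeasure Y) (f : Y →ᵇ ℝ) : ℝ := ∫ y, f y ∂(m : Measure Y)

variable [BorelSpace Y]

theorem continuous_integralFunctional :
    Continuous (integralFunctional : ProbabilityMeasure Y → (Y →ᵇ ℝ) → ℝ) :=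
  continuous_pi fun f => ProbabilityMeasure.continuous_integral_boundedContinuousFunction f

theorem integralFunctional_injective [HasOuterApproxClosed Y] :
    Injective (integralFunctional : ProbabilityMeasure Y → (Y →ᵇ ℝ) → ℝ) := fun _ _ h =>
  ProbabilityMeasure.toMeasure_injective <|
    ext_of_forall_integral_eq_of_IsFiniteMeasure fun f => congrFun h f

theorem integralFunctional_eq_of_coe_eq_smul_add_smul {m m₁ m₂ : ProbabilityMeasure Y}
    {a b : ℝ≥0∞} (ha : a ≠ ∞) (hb : b ≠ ∞)
    (h : (m : Measure Y) = a • (m₁ : Measure Y) + b • (m₂ : Measure Y)) :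
    integralFunctional m =
      a.toReal • integralFunctional m₁ + b.toReal • integralFunctional m₂ := by
  funext f
  simp only [integralFunctional, Pi.add_apply, Pi.smul_apply, h]
  rw [integral_add_measure ((f.integrable _).smul_measure ha) ((f.integrable _).smul_measure hb),
    integral_smul_measure, integral_smul_measure]

theorem coe_mem_extremePoints_of_integralFunctional_mem [HasOuterApproxClosed Y]
    {K : Set (ProbabilityMeasure Y)} {m : ProbabilityMeasure Y} (hm : m ∈ K)
    (hext : integralFunctional m ∈ (integralFunctional '' K).extremePoints ℝ) :
    (m : Measure Y) ∈ Set.extremePoints ℝ≥0∞ ((↑) '' K) := by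
  refine ⟨Set.mem_image_of_mem _ hm, ?_⟩
  rintro _ ⟨m₁, hm₁, rfl⟩ _ ⟨m₂, hm₂, rfl⟩ ⟨a, b, ha, hb, hab, hcomb⟩
  have ha_top : a ≠ ∞ := ne_top_of_le_ne_top ENNReal.one_ne_top (hab ▸ le_self_add)
  have hb_top : b ≠ ∞ := ne_top_of_le_ne_top ENNReal.one_ne_top (hab ▸ le_add_self)
  have heq : integralFunctional m₁ = integralFunctional m := by
    refine hext.2 (Set.mem_image_of_mem _ hm₁) (Set.mem_image_of_mem _ hm₂)
      ⟨a.toReal, b.toReal, ENNReal.toReal_pos ha.ne' ha_top, ENNReal.toReal_pos hb.ne' hb_top,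
        ?_, (integralFunctional_eq_of_coe_eq_smul_add_smul ha_top hb_top hcomb.symm).symm⟩
    rw [← ENNReal.toReal_add ha_top hb_top, hab, ENNReal.toReal_one]
  rw [integralFunctional_injective heq]

theorem exists_isMaxOn_integral_coe_mem_extremePoints [HasOuterApproxClosed Y]
    {K : Set (ProbabilityMeasure Y)} (hK : IsCompact K) (hne : K.Nonempty) (f : Y →ᵇ ℝ) :
    ∃ m ∈ K, IsMaxOn (fun m : ProbabilityMeasure Y => ∫ y, f y ∂(m : Measure Y)) K m ∧
      (m : Measure Y) ∈ Set.extremePoints ℝ≥0∞ ((↑) '' K) := by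
  obtain ⟨_, hext, hmax⟩ := exists_mem_extremePoints_isMaxOn
    (hK.image continuous_integralFunctional) (hne.image _) (ContinuousLinearMap.proj f)
  obtain ⟨m, hm, rfl⟩ := hext.1
  exact ⟨m, hm, fun m' hm' => hmax (Set.mem_image_of_mem _ hm'),
    coe_mem_extremePoints_of_integralFunctional_mem hm hext⟩

end ExtremePoints

section OrbitAverage

variable {Y W : Type*} [MeasurableSpace Y] [MeasurableSpace W] {T : Y → Y}

/-- The average of the push-forwards of `ν` under `T^[0], …, T^[n]`. -/
def orbitAverage (T : Y → Y) (ν : Measure Y) (n : ℕ) : Measure Y :=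
  ((n : ℝ≥0∞) + 1)⁻¹ • ∑ i ∈ Finset.range (n + 1), ν.map T^[i]

theorem inv_natCast_add_one_smul_sum_range {M : Type*} [AddCommMonoid M] [Module ℝ≥0∞ M]
    (n : ℕ) (a : M) : ((n : ℝ≥0∞) + 1)⁻¹ • ∑ _i ∈ Finset.range (n + 1), a = a := by
  rw [Finset.sum_const, Finset.card_range, ← Nat.cast_smul_eq_nsmul ℝ≥0∞, smul_smul,
    Nat.cast_add_one, ENNReal.inv_mul_cancel (by simp) (by finiteness), one_smul]

theorem isProbabilityMeasure_orbitAverage (hT : Measurable T) (ν : Measure Y)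
    [IsProbabilityMeasure ν] (n : ℕ) : IsProbabilityMeasure (orbitAverage T ν n) := by
  have hmass (i : ℕ) : ν.map T^[i] Set.univ = 1 := by
    rw [Measure.map_apply (hT.iterate i) .univ, Set.preimage_univ, measure_univ]
  constructor
  rw [orbitAverage, Measure.smul_apply, Measure.finsetSum_apply,
    Finset.sum_congr rfl fun i _ => hmass i, inv_natCast_add_one_smul_sum_range]

theorem orbitAverage_eq_self {ν : Measure Y} (hT : MeasurePreserving T ν ν) (n : ℕ) :
    orbitAverage T ν n = ν := by
  rw [orbitAverage, Finset.sum_congr rfl fun i _ => (hT.iterate i).map_eq,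
    inv_natCast_add_one_smul_sum_range]

theorem map_orbitAverage {S : W → W} {g : Y → W} (hT : Measurable T) (hS : Measurable S)
    (hg : Measurable g) (hsemi : Semiconj g T S) (ν : Measure Y) (n : ℕ) :
    (orbitAverage T ν n).map g = orbitAverage S (ν.map g) n := by
  rw [orbitAverage, orbitAverage, Measure.map_smul, ← Measure.mapₗ_apply_of_measurable hg,
    map_sum]
  refine congrArg _ (Finset.sum_congr rfl fun i _ => ?_)
  rw [Measure.mapₗ_apply_of_measurable hg, Measure.map_map hg (hT.iterate i),
    Measure.map_map (hS.iterate i) hg, (hsemi.iterate_right i).comp_eq]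

theorem ae_mem_orbitAverage {F : Set Y} (hF : MeasurableSet F) (hT : Measurable T)
    (hTF : Set.MapsTo T F F) {ν : Measure Y} (hν : ∀ᵐ y ∂ν, y ∈ F) (n : ℕ) :
    ∀ᵐ y ∂orbitAverage T ν n, y ∈ F := by
  refine Measure.ae_smul_measure ?_ _
  rw [ae_finsetSum_measure_iff]
  exact fun i _ => (ae_map_iff (hT.iterate i).aemeasurable hF).2 <|
    hν.mono fun y hy => hTF.iterate i hy

theorem integral_orbitAverage (hT : Measurable T) {ν : Measure Y} {f : Y → ℝ}
    (hf : ∀ i, Integrable f (ν.map T^[i])) (n : ℕ) :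
    ∫ y, f y ∂orbitAverage T ν n = ((n : ℝ) + 1)⁻¹ * ∫ y, birkhoffSum T f (n + 1) y ∂ν := by
  have hcomp (i : ℕ) : Integrable (fun y => f (T^[i] y)) ν :=
    (hf i).comp_measurable (hT.iterate i)
  rw [orbitAverage, integral_smul_measure, integral_finsetSum_measure fun i _ => hf i,
    ENNReal.toReal_inv, ENNReal.toReal_add (by finiteness) (by finiteness),
    ENNReal.toReal_natCast, ENNReal.toReal_one, smul_eq_mul]
  simp only [birkhoffSum]
  rw [integral_finsetSum _ fun i _ => hcomp i]
  exact congrArg _ (Finset.sum_congr rfl fun i _ =>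
    integral_map (hT.iterate i).aemeasurable (hf i).aestronglyMeasurable)

variable [TopologicalSpace Y] [BorelSpace Y]

theorem integral_map_sub_integral_orbitAverage (hT : Measurable T) (ν : Measure Y)
    [IsFiniteMeasure ν] (f : Y →ᵇ ℝ) (n : ℕ) :
    ∫ y, f y ∂(orbitAverage T ν n).map T - ∫ y, f y ∂orbitAverage T ν n =
      ((n : ℝ) + 1)⁻¹ * ∫ y, (f (T^[n + 1] y) - f y) ∂ν := by
  have hsum (ρ : Measure Y) [IsFiniteMeasure ρ] : Integrable (birkhoffSum T f (n + 1)) ρ :=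
    integrable_finsetSum _ fun i _ => (f.integrable _).comp_measurable (hT.iterate i)
  rw [map_orbitAverage hT hT hT (Function.Commute.refl T),
    integral_orbitAverage hT fun i => f.integrable _,
    integral_orbitAverage hT fun i => f.integrable _, ← mul_sub,
    integral_map hT.aemeasurable (hsum _).aestronglyMeasurable,
    ← integral_sub (by exact (hsum _).comp_measurable hT) (hsum ν)]
  simp only [birkhoffSum_apply_sub_birkhoffSum]

theorem tendsto_integral_map_sub_integral_orbitAverage (hT : Measurable T) (ν : ℕ → Measure Y)
    [∀ n, IsProbabilityMeasure (ν n)] (f : Y →ᵇ ℝ) :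
    Tendsto (fun n => ∫ y, f y ∂(orbitAverage T (ν n) n).map T -
      ∫ y, f y ∂orbitAverage T (ν n) n) atTop (𝓝 0) := by
  have hlim : Tendsto (fun n : ℕ => ((n : ℝ) + 1)⁻¹ * (‖f‖ + ‖f‖)) atTop (𝓝 0) := by
    simpa using (tendsto_one_div_add_atTop_nhds_zero_nat (𝕜 := ℝ)).mul_const (‖f‖ + ‖f‖)
  refine squeeze_zero_norm (fun n => ?_) hlim
  rw [integral_map_sub_integral_orbitAverage hT, norm_mul, Real.norm_of_nonneg (by positivity)]
  gcongr
  calc ‖∫ y, (f (T^[n + 1] y) - f y) ∂ν n‖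
      ≤ (‖f‖ + ‖f‖) * (ν n).real Set.univ := norm_integral_le_of_norm_le_const <|
        .of_forall fun y => (norm_sub_le _ _).trans <|
          add_le_add (f.norm_coe_le_norm _) (f.norm_coe_le_norm _)
    _ = ‖f‖ + ‖f‖ := by rw [probReal_univ, mul_one]

theorem measurePreserving_of_tendsto_orbitAverage [HasOuterApproxClosed Y] (hT : Continuous T)
    {ν : ℕ → Measure Y} [∀ n, IsProbabilityMeasure (ν n)] {ρ : ℕ → ProbabilityMeasure Y}
    (hρ : ∀ n, (ρ n : Measure Y) = orbitAverage T (ν n) n) {L : Filter ℕ} [L.NeBot]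
    (hL : L ≤ atTop) {m : ProbabilityMeasure Y} (hm : Tendsto ρ L (𝓝 m)) :
    MeasurePreserving T (m : Measure Y) m := by
  refine ⟨hT.measurable, ext_of_forall_integral_eq_of_IsFiniteMeasure fun f => ?_⟩
  have hlim (g : Y →ᵇ ℝ) : Tendsto (fun n => ∫ y, g y ∂orbitAverage T (ν n) n) L
      (𝓝 (∫ y, g y ∂(m : Measure Y))) := by
    simpa only [hρ] using ProbabilityMeasure.tendsto_iff_forall_integral_tendsto.1 hm g
  have hmap (ρ : Measure Y) : ∫ y, f.compContinuous ⟨T, hT⟩ y ∂ρ = ∫ y, f y ∂ρ.map T :=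
    (integral_map hT.measurable.aemeasurable f.continuous.aestronglyMeasurable).symm
  have hsub := (hlim (f.compContinuous ⟨T, hT⟩)).sub (hlim f)
  simp only [hmap] at hsub
  exact sub_eq_zero.1 <| tendsto_nhds_unique hsub <|
    (tendsto_integral_map_sub_integral_orbitAverage hT.measurable ν f).mono_left hL

end OrbitAverage

section WeakClosedness

variable {Y W : Type*} [TopologicalSpace Y] [MeasurableSpace Y] [BorelSpace Y]

theorem isClosed_setOf_map_eq [TopologicalSpace W] [MeasurableSpace W] [BorelSpace W]
    [HasOuterApproxClosed W] {g : Y → W} (hg : Continuous g) (ν : Measure W)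
    [IsProbabilityMeasure ν] :
    IsClosed {m : ProbabilityMeasure Y | (m : Measure Y).map g = ν} := by
  have hiff (m : ProbabilityMeasure Y) : (m : Measure Y).map g = ν ↔
      m.map hg.measurable.aemeasurable = ⟨ν, inferInstance⟩ :=
    ⟨fun h => Subtype.ext h, fun h => congrArg Subtype.val h⟩
  simpa only [hiff] using isClosed_eq (ProbabilityMeasure.continuous_map hg) continuous_const

variable [HasOuterApproxClosed Y]

theorem isClosed_setOf_measurePreserving {T : Y → Y} (hT : Continuous T) :
    IsClosed {m : ProbabilityMeasure Y | MeasurePreserving T (m : Measure Y) m} := by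
  have hiff (m : ProbabilityMeasure Y) : MeasurePreserving T (m : Measure Y) m ↔
      m.map hT.measurable.aemeasurable = m :=
    ⟨fun h => Subtype.ext h.map_eq, fun h => ⟨hT.measurable, Subtype.ext_iff.1 h⟩⟩
  simpa only [hiff] using! isClosed_eq (ProbabilityMeasure.continuous_map hT) continuous_id

theorem isClosed_setOf_ae_mem {F : Set Y} (hF : IsClosed F) :
    IsClosed {m : ProbabilityMeasure Y | ∀ᵐ y ∂(m : Measure Y), y ∈ F} := by
  refine isClosed_iff_ultrafilter.2 fun m u hu hmem => le_antisymm ?_ zero_le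
  have hzero : (fun m : ProbabilityMeasure Y => (m : Measure Y) Fᶜ) =ᶠ[u] fun _ => 0 := hmem
  calc (m : Measure Y) Fᶜ
      ≤ liminf (fun m : ProbabilityMeasure Y => (m : Measure Y) Fᶜ) u :=
        ProbabilityMeasure.le_liminf_measure_open_of_tendsto hu hF.isOpen_compl
    _ = 0 := by rw [liminf_congr hzero, liminf_const]

end WeakClosedness

section Joinings

variable {X Y : Type*} [MeasurableSpace X] [MeasurableSpace Y] {S : X → X} {T : Y → Y}
  {μ : Measure X} [IsProbabilityMeasure μ] {Z : Set Y}

/-- The joinings of `(S, μ)` with some `T`-invariant probability measure carried by `Z`: the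
`S × T`-invariant probability measures with first marginal `μ` that are carried by `X × Z`. -/
def joinings (S : X → X) (T : Y → Y) (μ : Measure X) (Z : Set Y) :
    Set (ProbabilityMeasure (X × Y)) :=
  {m | MeasurePreserving (Prod.map S T) (m : Measure (X × Y)) m ∧
    (m : Measure (X × Y)).map Prod.fst = μ ∧ ∀ᵐ p ∂(m : Measure (X × Y)), p.2 ∈ Z}

-- An ergodic `μ` has no other invariant probability measure absolutely continuous to it, so the
-- components of a convex decomposition of a joining still have first marginal `μ`.
theorem isExtreme_coe_image_joinings (hμ : Ergodic S μ) :
    IsExtreme ℝ≥0∞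
      {ν : Measure (X × Y) | MeasurePreserving (Prod.map S T) ν ν ∧ IsProbabilityMeasure ν}
      ((↑) '' joinings S T μ Z) := by
  constructor
  · rintro _ ⟨m, hm, rfl⟩
    exact ⟨hm.1, inferInstance⟩
  · rintro ν ⟨hinv, hprob⟩ ν' - _ ⟨m, hm, rfl⟩ ⟨a, b, ha, -, -, hcomb⟩
    have hac : ν ≪ m :=
      hcomb ▸ (Measure.absolutelyContinuous_smul ha.ne').trans (.add_right .rfl _)
    have hinv_fst : MeasurePreserving S (ν.map Prod.fst) (ν.map Prod.fst) :=
      (measurable_fst.measurePreserving ν).of_semiconj hinv (fun _ => rfl) hμ.measurable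
    have := Measure.isProbabilityMeasure_map (μ := ν) measurable_fst.aemeasurable
    have hfst : ν.map Prod.fst = μ :=
      hμ.eq_of_absolutelyContinuous hinv_fst (hm.2.1 ▸ hac.map measurable_fst)
    exact ⟨⟨ν, hprob⟩, ⟨hinv, hfst, hac.ae_le hm.2.2⟩, rfl⟩

variable [TopologicalSpace X] [CompactSpace X] [T2Space X] [SecondCountableTopology X]
  [BorelSpace X] [TopologicalSpace Y] [CompactSpace Y] [T2Space Y] [SecondCountableTopology Y]
  [BorelSpace Y]

theorem isCompact_joinings (hS : Continuous S) (hT : Continuous T) (hZ : IsClosed Z) :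
    IsCompact (joinings S T μ Z) :=
  ((isClosed_setOf_measurePreserving (hS.prodMap hT)).inter <|
    (isClosed_setOf_map_eq continuous_fst μ).inter <|
      isClosed_setOf_ae_mem (hZ.preimage continuous_snd)).isCompact

theorem exists_mem_joinings_ergodic_isMaxOn (hS : Continuous S) (hT : Continuous T)
    (hZ : IsClosed Z) (hμ : Ergodic S μ) (hne : (joinings S T μ Z).Nonempty)
    (f : X × Y →ᵇ ℝ) :
    ∃ m ∈ joinings S T μ Z, Ergodic (Prod.map S T) (m : Measure (X × Y)) ∧
      IsMaxOn (fun m : ProbabilityMeasure (X × Y) => ∫ p, f p ∂(m : Measure (X × Y)))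
        (joinings S T μ Z) m := by
  obtain ⟨m, hm, hmax, hext⟩ :=
    exists_isMaxOn_integral_coe_mem_extremePoints (isCompact_joinings hS hT hZ) hne f
  exact ⟨m, hm, .of_mem_extremePoints <|
    (isExtreme_coe_image_joinings hμ).extremePoints_subset_extremePoints hext, hmax⟩

theorem exists_mem_joinings_tendsto_orbitAverage (hS : Continuous S) (hT : Continuous T)
    (hμ : MeasurePreserving S μ μ) (hZ : IsClosed Z) (hTZ : Set.MapsTo T Z Z)
    (ν : ℕ → Measure (X × Y)) [hν : ∀ n, IsProbabilityMeasure (ν n)]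
    (hfst : ∀ n, (ν n).map Prod.fst = μ) (hsnd : ∀ n, ∀ᵐ p ∂ν n, p.2 ∈ Z) :
    ∃ m ∈ joinings S T μ Z, ∃ L : Filter ℕ, L.NeBot ∧ L ≤ atTop ∧ ∀ f : X × Y →ᵇ ℝ,
      Tendsto (fun n => ∫ p, f p ∂orbitAverage (Prod.map S T) (ν n) n) L
        (𝓝 (∫ p, f p ∂(m : Measure (X × Y)))) := by
  have hST : Continuous (Prod.map S T) := hS.prodMap hT
  let ρ (n : ℕ) : ProbabilityMeasure (X × Y) :=
    ⟨_, isProbabilityMeasure_orbitAverage hST.measurable (ν n) n⟩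
  obtain ⟨m, -, hm⟩ := isCompact_univ.ultrafilter_le_nhds
    ((Ultrafilter.of (atTop : Filter ℕ)).map ρ) (by simp)
  have hclosed := (isClosed_setOf_map_eq continuous_fst μ).inter
    (isClosed_setOf_ae_mem (hZ.preimage (continuous_snd (X := X))))
  have hlim : m ∈ _ := hclosed.mem_of_tendsto hm <| .of_forall fun n => by
    constructor
    · calc (orbitAverage (Prod.map S T) (ν n) n).map Prod.fst
          = orbitAverage S ((ν n).map Prod.fst) n :=
            map_orbitAverage hST.measurable hS.measurable measurable_fst (fun _ => rfl) _ n
        _ = μ := by rw [hfst, orbitAverage_eq_self hμ]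
    · exact ae_mem_orbitAverage (measurable_snd hZ.measurableSet) hST.measurable
        (fun p hp => hTZ hp) (hsnd n) n
  have hinv : MeasurePreserving (Prod.map S T) (m : Measure (X × Y)) m :=
    measurePreserving_of_tendsto_orbitAverage hST (fun n => rfl) (Ultrafilter.of_le _) hm
  exact ⟨m, ⟨hinv, hlim⟩, _, inferInstance, Ultrafilter.of_le _,
    ProbabilityMeasure.tendsto_iff_forall_integral_tendsto.1 hm⟩

end Joinings

section VariationalPrinciple

theorem continuous_birkhoffSum {Y M : Type*} [TopologicalSpace Y] [AddCommMonoid M]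
    [TopologicalSpace M] [ContinuousAdd M] {T : Y → Y} {f : Y → M} (hT : Continuous T)
    (hf : Continuous f) (n : ℕ) : Continuous (birkhoffSum T f n) :=
  continuous_finsetSum _ fun i _ => hf.comp (hT.iterate i)

theorem exists_measurable_forall_mem_and_lt {X Y : Type*} [MeasurableSpace X]
    [TopologicalSpace X] [OpensMeasurableSpace X] [MeasurableSpace Y] [TopologicalSpace Y]
    [SecondCountableTopology Y] {Z : Set Y} (hne : Z.Nonempty) {F : X × Y → ℝ}
    (hF : Continuous F) {g : X → ℝ} (hg : Measurable g) (h : ∀ x, ∃ y ∈ Z, g x < F (x, y)) :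
    ∃ G : X → Y, Measurable G ∧ ∀ x, G x ∈ Z ∧ g x < F (x, G x) := by
  have : Nonempty Z := hne.to_subtype
  have hdense (x : X) : ∃ n, g x < F (x, TopologicalSpace.denseSeq Z n) := by
    obtain ⟨y, hy, hlt⟩ := h x
    have hopen : IsOpen {y : Z | g x < F (x, y)} :=
      isOpen_lt continuous_const (by fun_prop)
    exact (TopologicalSpace.denseRange_denseSeq Z).exists_mem_open hopen ⟨⟨y, hy⟩, hlt⟩
  have hmeas (n : ℕ) : MeasurableSet {x | g x < F (x, TopologicalSpace.denseSeq Z n)} :=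
    measurableSet_lt hg (Continuous.measurable (by fun_prop))
  classical
  refine ⟨fun x => TopologicalSpace.denseSeq Z (Nat.find (hdense x)),
    .find (f := fun n _ => (TopologicalSpace.denseSeq Z n : Y)) (fun n => measurable_const)
      hmeas hdense, fun x => ⟨Subtype.coe_prop _, Nat.find_spec (hdense x)⟩⟩

variable {X Y : Type*} {S : X → X} {T : Y → Y} {Z : Set Y}

/-- The supremum over `y ∈ Z` of the `n`-th Birkhoff sum of `f` along the `S × T`-orbit of
`(x, y)`. -/
def maxBirkhoffSum (S : X → X) (T : Y → Y) (f : X × Y → ℝ) (Z : Set Y) (n : ℕ) (x : X) : ℝ :=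
  sSup ((fun y => birkhoffSum (Prod.map S T) f n (x, y)) '' Z)

variable [TopologicalSpace X] [TopologicalSpace Y] {f : X × Y → ℝ}

theorem continuous_maxBirkhoffSum (hS : Continuous S) (hT : Continuous T) (hf : Continuous f)
    (hZ : IsCompact Z) (n : ℕ) : Continuous (maxBirkhoffSum S T f Z n) :=
  hZ.continuous_sSup (continuous_birkhoffSum (hS.prodMap hT) hf n)

theorem birkhoffSum_le_maxBirkhoffSum (hS : Continuous S) (hT : Continuous T)
    (hf : Continuous f) (hZ : IsCompact Z) (n : ℕ) (x : X) {y : Y} (hy : y ∈ Z) :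
    birkhoffSum (Prod.map S T) f n (x, y) ≤ maxBirkhoffSum S T f Z n x :=
  have hcont : Continuous fun y => birkhoffSum (Prod.map S T) f n (x, y) :=
    (continuous_birkhoffSum (hS.prodMap hT) hf n).comp (.prodMk_right x)
  le_csSup (hZ.image hcont).bddAbove (Set.mem_image_of_mem _ hy)

variable [MeasurableSpace X] [MeasurableSpace Y] {μ : Measure X} [IsProbabilityMeasure μ]
  [CompactSpace X] [BorelSpace X] [CompactSpace Y] [SecondCountableTopology Y] [BorelSpace Y]
  {f : X × Y →ᵇ ℝ}

theorem integral_le_integral_maxBirkhoffSum (hS : Continuous S) (hT : Continuous T)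
    (hZ : IsCompact Z) {m : ProbabilityMeasure (X × Y)} (hm : m ∈ joinings S T μ Z) (n : ℕ) :
    ∫ p, f p ∂(m : Measure (X × Y)) ≤
      ((n : ℝ) + 1)⁻¹ * ∫ x, maxBirkhoffSum S T f Z (n + 1) x ∂μ := by
  obtain ⟨hinv, rfl, hmZ⟩ := hm
  have hmax := continuous_maxBirkhoffSum hS hT f.continuous hZ (n + 1)
  have hsum := continuous_birkhoffSum (hS.prodMap hT) f.continuous (n + 1)
  have hmax_int : Integrable (fun p : X × Y => maxBirkhoffSum S T f Z (n + 1) p.1) m :=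
    (hmax.comp continuous_fst).integrable_of_hasCompactSupport (.of_compactSpace _)
  calc ∫ p, f p ∂(m : Measure (X × Y))
      = ∫ p, f p ∂orbitAverage (Prod.map S T) m n := by rw [orbitAverage_eq_self hinv]
    _ = ((n : ℝ) + 1)⁻¹ * ∫ p, birkhoffSum (Prod.map S T) f (n + 1) p ∂(m : Measure (X × Y)) :=
        integral_orbitAverage hinv.measurable (fun i => f.integrable _) n
    _ ≤ ((n : ℝ) + 1)⁻¹ * ∫ p, maxBirkhoffSum S T f Z (n + 1) p.1 ∂(m : Measure (X × Y)) := by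
        refine mul_le_mul_of_nonneg_left (integral_mono_ae
          (hsum.integrable_of_hasCompactSupport (.of_compactSpace _)) hmax_int ?_) (by positivity)
        filter_upwards [hmZ] with p hp
        exact birkhoffSum_le_maxBirkhoffSum hS hT f.continuous hZ _ _ hp
    _ = _ := by rw [integral_map measurable_fst.aemeasurable hmax.aestronglyMeasurable]

variable [T2Space Y]

theorem exists_integral_maxBirkhoffSum_sub_one_le (hS : Continuous S) (hT : Continuous T)
    (hZ : IsCompact Z) (hne : Z.Nonempty) (f : X × Y →ᵇ ℝ) (n : ℕ) :
    ∃ ν : Measure (X × Y), IsProbabilityMeasure ν ∧ ν.map Prod.fst = μ ∧ (∀ᵐ p ∂ν, p.2 ∈ Z) ∧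
      ∫ x, maxBirkhoffSum S T f Z n x ∂μ - 1 ≤ ∫ p, birkhoffSum (Prod.map S T) f n p ∂ν := by
  have hsum := continuous_birkhoffSum (hS.prodMap hT) f.continuous n
  have hmax := continuous_maxBirkhoffSum hS hT f.continuous hZ n
  have hmax_int : Integrable (maxBirkhoffSum S T f Z n) μ :=
    hmax.integrable_of_hasCompactSupport (.of_compactSpace _)
  have hnear (x : X) : ∃ y ∈ Z,
      maxBirkhoffSum S T f Z n x - 1 < birkhoffSum (Prod.map S T) f n (x, y) := by
    obtain ⟨y, hy, heq, -⟩ := hZ.exists_sSup_image_eq_and_ge hne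
      (hsum.comp (.prodMk_right x)).continuousOn
    exact ⟨y, hy, (sub_one_lt _).trans_eq heq⟩
  obtain ⟨G, hG, hGZ⟩ :=
    exists_measurable_forall_mem_and_lt hne hsum (hmax.measurable.sub_const 1) hnear
  have hgraph : Measurable fun x => (x, G x) := measurable_id.prodMk hG
  refine ⟨μ.map fun x => (x, G x), Measure.isProbabilityMeasure_map hgraph.aemeasurable,
    ?_, ?_, ?_⟩
  · rw [Measure.map_map measurable_fst hgraph]
    exact Measure.map_id
  · exact (ae_map_iff hgraph.aemeasurable (measurable_snd hZ.measurableSet)).2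
      (.of_forall fun x => (hGZ x).1)
  · rw [integral_map hgraph.aemeasurable hsum.aestronglyMeasurable]
    calc ∫ x, maxBirkhoffSum S T f Z n x ∂μ - 1
        = ∫ x, (maxBirkhoffSum S T f Z n x - 1) ∂μ := by
          rw [integral_sub hmax_int (integrable_const 1), integral_const, probReal_univ, one_smul]
      _ ≤ ∫ x, birkhoffSum (Prod.map S T) f n (x, G x) ∂μ :=
          integral_mono (hmax_int.sub (integrable_const 1))
            ((hsum.integrable_of_hasCompactSupport (.of_compactSpace _)).comp_measurable hgraph)
            fun x => (hGZ x).2.le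

variable [T2Space X] [SecondCountableTopology X]

theorem exists_mem_joinings_isGLB_integral_maxBirkhoffSum (hS : Continuous S)
    (hT : Continuous T) (hμ : MeasurePreserving S μ μ) (hZ : IsCompact Z) (hne : Z.Nonempty)
    (hTZ : Set.MapsTo T Z Z) (f : X × Y →ᵇ ℝ) :
    ∃ m ∈ joinings S T μ Z,
      IsGLB (Set.range fun n : ℕ => ((n : ℝ) + 1)⁻¹ * ∫ x, maxBirkhoffSum S T f Z (n + 1) x ∂μ)
        (∫ p, f p ∂(m : Measure (X × Y))) := by
  choose ν hν hfst hsnd hnear using fun n : ℕ =>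
    exists_integral_maxBirkhoffSum_sub_one_le (μ := μ) hS hT hZ hne f (n + 1)
  obtain ⟨m, hm, L, _, hL, hlim⟩ := exists_mem_joinings_tendsto_orbitAverage hS hT hμ
    hZ.isClosed hTZ ν hfst hsnd
  refine ⟨m, hm, ?_, fun c hc => ?_⟩
  · rintro _ ⟨n, rfl⟩
    exact integral_le_integral_maxBirkhoffSum hS hT hZ hm n
  have happrox (n : ℕ) : c - 1 / ((n : ℝ) + 1) ≤
      ∫ p, f p ∂orbitAverage (Prod.map S T) (ν n) n := by
    rw [integral_orbitAverage (hS.prodMap hT).measurable fun i => f.integrable _]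
    calc c - 1 / ((n : ℝ) + 1)
        ≤ ((n : ℝ) + 1)⁻¹ * ∫ x, maxBirkhoffSum S T f Z (n + 1) x ∂μ - 1 / ((n : ℝ) + 1) :=
          sub_le_sub_right (hc (Set.mem_range_self n)) _
      _ = ((n : ℝ) + 1)⁻¹ * (∫ x, maxBirkhoffSum S T f Z (n + 1) x ∂μ - 1) := by
          rw [mul_sub, mul_one, one_div]
      _ ≤ _ := by
          gcongr
          exact hnear n
  have hzero : Tendsto (fun n : ℕ => c - 1 / ((n : ℝ) + 1)) L (𝓝 c) := by
    simpa using (tendsto_one_div_add_atTop_nhds_zero_nat.mono_left hL).const_sub c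
  exact le_of_tendsto_of_tendsto' hzero (hlim f) happrox

theorem exists_mem_joinings_ergodic_isMaxOn_integral_eq_iInf (hS : Continuous S)
    (hT : Continuous T) (hμ : Ergodic S μ) (hZ : IsCompact Z) (hne : Z.Nonempty)
    (hTZ : Set.MapsTo T Z Z) (f : X × Y →ᵇ ℝ) :
    ∃ m ∈ joinings S T μ Z, Ergodic (Prod.map S T) (m : Measure (X × Y)) ∧
      IsMaxOn (fun m : ProbabilityMeasure (X × Y) => ∫ p, f p ∂(m : Measure (X × Y)))
        (joinings S T μ Z) m ∧
      ∫ p, f p ∂(m : Measure (X × Y)) =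
        ⨅ n : ℕ, ((n : ℝ) + 1)⁻¹ * ∫ x, maxBirkhoffSum S T f Z (n + 1) x ∂μ := by
  obtain ⟨m₀, hm₀, hglb⟩ := exists_mem_joinings_isGLB_integral_maxBirkhoffSum hS hT
    hμ.toMeasurePreserving hZ hne hTZ f
  obtain ⟨m, hm, herg, hmax⟩ :=
    exists_mem_joinings_ergodic_isMaxOn hS hT hZ.isClosed hμ ⟨m₀, hm₀⟩ f
  refine ⟨m, hm, herg, hmax, le_antisymm ?_ ?_⟩
  · exact le_ciInf fun n => integral_le_integral_maxBirkhoffSum hS hT hZ hm n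
  · exact hglb.ciInf_eq.trans_le (hmax hm₀)

end VariationalPrinciple

section Agreement

theorem continuous_shift : Continuous shift := continuous_pi fun i => continuous_apply (i + 1)

theorem shift_iterate_apply (n : ℕ) (x : Sig) (j : ℤ) : shift^[n] x j = x (j + n) := by
  induction n generalizing x with
  | zero => simp
  | succ n ih => rw [iterate_succ_apply, ih, shift, Nat.cast_succ, add_assoc]

theorem isClopen_setOf_apply_zero_eq : IsClopen {p : Sig × Sig | p.1 0 = p.2 0} :=
  ⟨isClosed_eq (by fun_prop) (by fun_prop),
    (isOpen_discrete {b : Bool × Bool | b.1 = b.2}).preimage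
      (f := fun p : Sig × Sig => (p.1 0, p.2 0)) (by fun_prop)⟩

/-- The indicator function of the event that two sequences agree at time `0`. -/
def agreement : Sig × Sig →ᵇ ℝ :=
  .indicator {p | p.1 0 = p.2 0} isClopen_setOf_apply_zero_eq

theorem integral_agreement (m : Measure (Sig × Sig)) [IsProbabilityMeasure m] :
    ∫ p, agreement p ∂m = 1 - (m {p | p.1 0 ≠ p.2 0}).toReal := by
  have hmeas : MeasurableSet {p : Sig × Sig | p.1 0 = p.2 0} :=
    isClopen_setOf_apply_zero_eq.isClosed.measurableSet
  calc ∫ p, agreement p ∂m = m.real {p | p.1 0 = p.2 0} := integral_indicator_one hmeas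
    _ = 1 - m.real {p | p.1 0 = p.2 0}ᶜ := by rw [probReal_compl_eq_one_sub hmeas, sub_sub_cancel]

theorem birkhoffSum_agreement (n : ℕ) (x y : Sig) :
    birkhoffSum (Prod.map shift shift) agreement n (x, y) =
      ∑ i ∈ Finset.range n, if x (i : ℤ) = y i then (1 : ℝ) else 0 := by
  refine Finset.sum_congr rfl fun i _ => ?_
  simp [agreement, Set.indicator_apply, Prod.map_iterate, shift_iterate_apply]

theorem ciSup_comp_eq_sSup_image_closure_range {ι β : Type*} [Nonempty ι] [TopologicalSpace β]
    {u : ι → β} (hu : IsCompact (closure (Set.range u))) {g : β → ℝ} (hg : Continuous g) :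
    ⨆ i, g (u i) = sSup (g '' closure (Set.range u)) := by
  have hlub : IsLUB (g '' closure (Set.range u)) (sSup (g '' closure (Set.range u))) :=
    (hu.image hg).isLUB_sSup ((Set.range_nonempty u).closure.image g)
  rw [image_closure_of_isCompact hu hg.continuousOn, ← Set.range_comp] at hlub ⊢
  exact ((isLUB_iff_of_subset_of_subset_closure subset_closure subset_rfl).2 hlub).ciSup_eq

theorem birk_eq_maxBirkhoffSum {Z : Set Sig} (hZ : IsCompact Z) {z : Sig}
    (hdense : closure (Set.range fun n : ℤ => (fun j => z (j + n) : Sig)) = Z)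
    {φ : Bool → ℤ → ℝ} (hφ1 : ∀ i : ℤ, φ (z i) i = 1) (hφ0 : ∀ i : ℤ, φ (!(z i)) i = 0)
    (n : ℕ) (x : Sig) : birk φ n x = maxBirkhoffSum shift shift agreement Z n x := by
  have hφ (b : Bool) (i : ℤ) : φ b i = if b = z i then 1 else 0 := by
    rcases Bool.eq_or_eq_not b (z i) with rfl | rfl
    · rw [hφ1, if_pos rfl]
    · rw [hφ0, if_neg (Bool.not_ne_self _)]
  subst hdense
  have hcont : Continuous fun y => birkhoffSum (Prod.map shift shift) agreement n (x, y) :=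
    (continuous_birkhoffSum (continuous_shift.prodMap continuous_shift) agreement.continuous n).comp
      (.prodMk_right x)
  rw [maxBirkhoffSum, ← ciSup_comp_eq_sSup_image_closure_range hZ hcont]
  simp only [birk, hφ, birkhoffSum_agreement]

variable {Z : Set Sig} {μ : Measure Sig}

theorem mk_mem_joinings (hZ : MeasurableSet Z) {ν : Measure Sig} [IsProbabilityMeasure ν]
    (hνZ : ν Z = 1) {m : Measure (Sig × Sig)} (hm : IsProbabilityMeasure m)
    (hinv : m.map (Prod.map shift shift) = m) (hfst : m.map Prod.fst = μ)
    (hsnd : m.map Prod.snd = ν) : ⟨m, hm⟩ ∈ joinings shift shift μ Z := by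
  refine ⟨⟨(continuous_shift.prodMap continuous_shift).measurable, hinv⟩, hfst, ?_⟩
  rw [← prob_compl_eq_zero_iff hZ] at hνZ
  exact (ae_map_iff measurable_snd.aemeasurable hZ).1 (hsnd ▸ hνZ)

theorem dbar_le_one_sub_integral_agreement {m : Measure (Sig × Sig)} [hm : IsProbabilityMeasure m]
    (hinv : MeasurePreserving (Prod.map shift shift) m m) :
    dbar (m.map Prod.fst) (m.map Prod.snd) ≤ 1 - ∫ p, agreement p ∂m := by
  refine csInf_le ⟨0, ?_⟩ ⟨m, hm, hinv.map_eq, rfl, rfl, ?_⟩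
  · rintro _ ⟨m', -, -, -, -, rfl⟩
    exact ENNReal.toReal_nonneg
  · rw [integral_agreement, sub_sub_cancel]

theorem le_dbar [IsProbabilityMeasure μ] {ν : Measure Sig} [IsProbabilityMeasure ν]
    (hμ : MeasurePreserving shift μ μ) (hν : MeasurePreserving shift ν ν) {c : ℝ}
    (h : ∀ m : Measure (Sig × Sig), IsProbabilityMeasure m → m.map (Prod.map shift shift) = m →
      m.map Prod.fst = μ → m.map Prod.snd = ν → c ≤ (m {p | p.1 0 ≠ p.2 0}).toReal) :
    c ≤ dbar μ ν := by
  refine le_csInf ⟨_, μ.prod ν, inferInstance, (hμ.prod hν).map_eq,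
    measurePreserving_fst.map_eq, measurePreserving_snd.map_eq, rfl⟩ ?_
  rintro _ ⟨m, hm, hinv, hfst, hsnd, rfl⟩
  exact h m hm hinv hfst hsnd

theorem one_sub_integral_agreement_le_dbar [IsProbabilityMeasure μ] (hZ : MeasurableSet Z)
    (hμ : MeasurePreserving shift μ μ) {m : ProbabilityMeasure (Sig × Sig)}
    (hmax : IsMaxOn (fun m : ProbabilityMeasure (Sig × Sig) =>
      ∫ p, agreement p ∂(m : Measure (Sig × Sig))) (joinings shift shift μ Z) m)
    {ν : Measure Sig} [IsProbabilityMeasure ν] (hν : MeasurePreserving shift ν ν)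
    (hνZ : ν Z = 1) : 1 - ∫ p, agreement p ∂(m : Measure (Sig × Sig)) ≤ dbar μ ν := by
  refine le_dbar hμ hν fun m' hm' hinv hfst hsnd => ?_
  rw [sub_le_comm, ← integral_agreement]
  exact hmax (mk_mem_joinings hZ hνZ hm' hinv hfst hsnd)

theorem isLeast_dbar_of_isMaxOn_integral_agreement [IsProbabilityMeasure μ]
    (hZ : MeasurableSet Z) (hμ : MeasurePreserving shift μ μ)
    {m : ProbabilityMeasure (Sig × Sig)} (hm : m ∈ joinings shift shift μ Z)
    (herg : Ergodic (Prod.map shift shift) (m : Measure (Sig × Sig)))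
    (hmax : IsMaxOn (fun m : ProbabilityMeasure (Sig × Sig) =>
      ∫ p, agreement p ∂(m : Measure (Sig × Sig))) (joinings shift shift μ Z) m) :
    IsLeast {r : ℝ | ∃ ν : Measure Sig,
        IsProbabilityMeasure ν ∧ Ergodic shift ν ∧ ν Z = 1 ∧ r = dbar μ ν}
      (1 - ∫ p, agreement p ∂(m : Measure (Sig × Sig))) := by
  obtain ⟨hinv, hfst, hmZ⟩ := hm
  have hsnd_prob : IsProbabilityMeasure ((m : Measure (Sig × Sig)).map Prod.snd) :=
    Measure.isProbabilityMeasure_map measurable_snd.aemeasurable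
  have hsnd_erg : Ergodic shift ((m : Measure (Sig × Sig)).map Prod.snd) :=
    (measurable_snd.measurePreserving _).ergodic_of_ergodic_semiconj herg
      continuous_shift.measurable fun _ => rfl
  have hsnd_Z : (m : Measure (Sig × Sig)).map Prod.snd Z = 1 := by
    rw [← prob_compl_eq_zero_iff hZ]
    exact (ae_map_iff measurable_snd.aemeasurable hZ).2 hmZ
  constructor
  · refine ⟨_, hsnd_prob, hsnd_erg, hsnd_Z, le_antisymm ?_ ?_⟩
    · exact one_sub_integral_agreement_le_dbar hZ hμ hmax hsnd_erg.toMeasurePreserving hsnd_Z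
    · exact hfst ▸ dbar_le_one_sub_integral_agreement hinv
  · rintro _ ⟨ν, hν, hν_erg, hνZ, rfl⟩
    exact one_sub_integral_agreement_le_dbar hZ hμ hmax hν_erg.toMeasurePreserving hνZ

end Agreement

/-- Let `Z ⊆ Σ₂` be a nonempty compact shift-invariant set and `z ∈ Z` a point with dense
(two-sided) orbit.  If `φ (z i) i = 1` and `φ (1 - z i) i = 0` for all `i ∈ ℤ`, then for
every ergodic shift-invariant probability measure `μ` on `Σ₂`,
`Λ(φ,μ) = 1 − inf { d̄(μ,ν) : ν ergodic, ν Z = 1 }`. -/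
theorem Lam_eq_one_sub_dbar
    (Z : Set Sig) (hZne : Z.Nonempty) (hZcpt : IsCompact Z) (hZinv : shift '' Z = Z)
    (z : Sig) (hz : z ∈ Z)
    (hdense : closure (Set.range fun n : ℤ => (fun j => z (j + n) : Sig)) = Z)
    (φ : Bool → ℤ → ℝ)
    (hφ1 : ∀ i : ℤ, φ (z i) i = 1) (hφ0 : ∀ i : ℤ, φ (!(z i)) i = 0)
    (μ : Measure Sig) (hprob : IsProbabilityMeasure μ) (herg : Ergodic shift μ) :
    Lam φ μ = 1 - sInf {r : ℝ | ∃ ν : Measure Sig,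
      IsProbabilityMeasure ν ∧ Ergodic shift ν ∧ ν Z = 1 ∧ r = dbar μ ν} := by
  obtain ⟨m, hm, hm_erg, hmax, hint⟩ := exists_mem_joinings_ergodic_isMaxOn_integral_eq_iInf
    continuous_shift continuous_shift herg hZcpt hZne (Set.mapsTo_iff_image_subset.2 hZinv.le)
    agreement
  have hLam : Lam φ μ = ∫ p, agreement p ∂(m : Measure (Sig × Sig)) := by
    simp only [hint, Lam, birk_eq_maxBirkhoffSum hZcpt hdense hφ1 hφ0]
  have hleast := isLeast_dbar_of_isMaxOn_integral_agreement hZcpt.measurableSet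
    herg.toMeasurePreserving hm hm_erg hmax
  rw [hleast.csInf_eq, hLam, sub_sub_cancel]
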